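/- arXiv:1302.5391 — 2 statements merged into one kernel-verified Lean document; each statement's English description precedes it below -/
import Mathlib

section
/- Let A be a commutative ring containing ℚ, B a cocommutative A-bialgebra, and A' the subalgebra of B generated by Prim(B). Then the series log_*(I) = ∑_{n≥1} ((−1)^{n−1}/n)(I⁺)^{*n} is summable on A', the resulting map π₁ sends A' into Prim(B), and π₁(x) = x for every x ∈ Prim(B); that is, π₁ restricted to A' is a projector of A' onto Prim(B). -/
/-!
Work in the convolution algebras `Hom(B, C)`, where `C` is an `A`-algebra. Composition with an
algebra map `h : B → C` is a morphism of convolution algebras, so `h ∘ (I⁺)^{*n} = (h - 1)^{*n}`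
and `h ∘ log I = log h`. Take for `h` the coproduct `Δ` and the two inclusions `i₁ x = x ⊗ 1`,
`i₂ x = 1 ⊗ x` of `B` into `B ⊗ B`. One has `Δ = i₁ * i₂`, and cocommutativity says that
`i₁ * i₂ = i₂ * i₁`. Hence `Δ ∘ log I = log Δ = log i₁ + log i₂ = i₁ ∘ log I + i₂ ∘ log I`, which
says precisely that the values of `log I` are primitive.

To make sense of the logarithms, filter `A'` by the span `F N` of the products of at most `N`
primitive elements. Since `Δ (F N) ⊆ 1 ⊗ F N + B ⊗ F (N - 1)` (`map_comul_primFil_le`), a map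
killing `1` has all its convolution powers of exponent `> N` zero on `F N`
(`convPow_apply_eq_zero_of_lt`). This gives summability, and with `N = 1` the identity
`log I = I⁺ = I` on primitive elements. Since `Δ` maps `F N` into the images of both `B ⊗ F N` and
`F N ⊗ B`, the maps vanishing on `F N` form a two-sided ideal (`annFil`); modulo it `Δ - 1`,
`i₁ - 1` and `i₂ - 1` are nilpotent.

It remains to see that `log (ab) = log a + log b` for commuting unipotent `a`, `b`, `ab` in a
`ℚ`-algebra (`log_mul`). The powers `a^k` are interpolated by the polynomial
`∑_j (T choose j) (a - 1)^j`, whose constant coefficient is `1` and whose linear coefficient is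
`log a`; since `(ab)^k = a^k b^k` for all `k`, the interpolating polynomials multiply, and
comparing linear coefficients gives the claim.
-/

noncomputable section
namespace PaperD

variable (A : Type*) (B : Type*) [CommRing A] [Ring B] [Bialgebra A B]

/-- Convolution product `f * g = μ ∘ (f ⊗ g) ∘ Δ` on `End_A(B)` for a bialgebra `B`. -/
def bconv (f g : B →ₗ[A] B) : B →ₗ[A] B :=
  (LinearMap.mul' A B) ∘ₗ (TensorProduct.map f g) ∘ₗ Coalgebra.comul

/-- Unit of the convolution algebra: `e = 1_B ∘ ε`. -/
def bunit : B →ₗ[A] B := (Algebra.linearMap A B) ∘ₗ Coalgebra.counit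

/-- Convolution powers, `f^{*0} = e`. -/
def bconvPow (f : B →ₗ[A] B) : ℕ → (B →ₗ[A] B)
  | 0 => bunit A B
  | n + 1 => bconv A B f (bconvPow f n)

/-- `I⁺ = I − e`. -/
def Iplus : B →ₗ[A] B := LinearMap.id - bunit A B

/-- The submodule of primitive elements `Prim(B) = {x | Δ x = x ⊗ 1 + 1 ⊗ x}`. -/
def prim : Submodule A B :=
  LinearMap.ker ((Coalgebra.comul (R := A) (A := B)) -
    ((TensorProduct.mk A B B).flip 1 + TensorProduct.mk A B B 1))

/-- Coefficients of the series `log(1+T)`. -/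
def logCoeff (n : ℕ) : ℚ := if n = 0 then 0 else (-1 : ℚ) ^ (n - 1) / n

/-! ### The logarithm of a product of commuting unipotent elements -/

open Polynomial in
/-- Over a possibly noncommutative `ℚ`-algebra with zero divisors, a polynomial is still determined
by its values at the natural numbers: each `ℚ`-linear functional applied to the coefficients
reduces this to `ℚ[X]`. -/
theorem eq_zero_of_eval_natCast {R : Type*} [Ring R] [Algebra ℚ R] (p : R[X])
    (h : ∀ k : ℕ, p.eval (k : R) = 0) : p = 0 := by
  ext i
  rw [coeff_zero, ← Module.forall_dual_apply_eq_zero_iff ℚ]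
  intro φ
  set q : ℚ[X] := ∑ j ∈ p.support, monomial j (φ (p.coeff j)) with hq
  have hq0 : q = 0 := by
    apply Polynomial.eq_zero_of_infinite_isRoot
    refine (Set.infinite_range_of_injective (Nat.cast_injective (R := ℚ))).mono ?_
    rintro _ ⟨k, rfl⟩
    have h1 := congrArg φ (h k)
    rw [eval_eq_sum, Polynomial.sum, map_sum, map_zero] at h1
    change q.eval (k : ℚ) = 0
    rw [hq, eval_finsetSum, ← h1]
    refine Finset.sum_congr rfl fun j _ => ?_
    have : p.coeff j * (k : R) ^ j = ((k : ℚ) ^ j) • p.coeff j := by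
      rw [Algebra.smul_def, map_pow, map_natCast, ← Nat.cast_pow, Nat.cast_comm]
    rw [this, map_smul, eval_monomial, smul_eq_mul, mul_comm]
  have h2 := congrArg (fun r => coeff r i) hq0
  simp only [hq, finsetSum_coeff, coeff_monomial, Finset.sum_ite_eq', coeff_zero] at h2
  by_cases hi : i ∈ p.support
  · simpa [hi] using h2
  · rw [notMem_support_iff.mp hi, map_zero]

open Polynomial in
/-- The binomial coefficient `T ↦ T choose j` as a rational polynomial. -/
def binomPoly (j : ℕ) : ℚ[X] := C ((j.factorial : ℚ)⁻¹) * descPochhammer ℚ j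

theorem binomPoly_eval (j k : ℕ) : (binomPoly j).eval (k : ℚ) = (k.choose j : ℚ) := by
  have : (j.factorial : ℚ) ≠ 0 := by positivity
  rw [binomPoly, Polynomial.eval_mul, Polynomial.eval_C, descPochhammer_eval_eq_descFactorial,
    Nat.descFactorial_eq_factorial_mul_choose, Nat.cast_mul, inv_mul_cancel_left₀ this]

theorem binomPoly_coeff_zero (j : ℕ) : (binomPoly j).coeff 0 = if j = 0 then 1 else 0 := by
  rw [binomPoly, Polynomial.coeff_C_mul, Polynomial.coeff_zero_eq_eval_zero,
    descPochhammer_eval_zero]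
  split_ifs with h <;> simp [h]

theorem binomPoly_coeff_one (j : ℕ) : (binomPoly j).coeff 1 = logCoeff j := by
  rcases j with _ | j
  · simp [binomPoly, logCoeff, Polynomial.coeff_one]
  · have h1 : ∀ n : ℕ, (descPochhammer ℚ n).eval (-1) = (-1) ^ n * (n.factorial : ℚ) := by
      intro n
      induction n with
      | zero => simp
      | succ n ih =>
        rw [descPochhammer_succ_eval, ih, Nat.factorial_succ]
        push_cast
        ring
    have h2 : (descPochhammer ℚ (j + 1)).coeff 1 = (-1) ^ j * (j.factorial : ℚ) := by
      rw [descPochhammer_succ_left, Polynomial.coeff_X_mul, Polynomial.coeff_zero_eq_eval_zero,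
        Polynomial.eval_comp, ← h1]
      simp
    have : (j.factorial : ℚ) ≠ 0 := by positivity
    have : ((j : ℚ) + 1) ≠ 0 := by positivity
    rw [binomPoly, Polynomial.coeff_C_mul, h2, logCoeff, if_neg (Nat.succ_ne_zero j),
      Nat.factorial_succ, Nat.add_sub_cancel]
    push_cast
    field_simp

open Polynomial in
/-- The polynomial `∑_{j<M} (T choose j) u^j`: for `u ^ M = 0` it interpolates the powers
`(1 + u)^k`, and its linear coefficient is `log (1 + u)`. -/
def powPoly {R : Type*} [Ring R] [Algebra ℚ R] (u : R) (M : ℕ) : R[X] :=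
  ∑ j ∈ Finset.range M, C (u ^ j) * (binomPoly j).map (algebraMap ℚ R)

theorem powPoly_coeff {R : Type*} [Ring R] [Algebra ℚ R] (u : R) (M i : ℕ) :
    (powPoly u M).coeff i = ∑ j ∈ Finset.range M, (binomPoly j).coeff i • u ^ j := by
  rw [powPoly, Polynomial.finsetSum_coeff]
  refine Finset.sum_congr rfl fun j _ => ?_
  rw [Polynomial.coeff_C_mul, Polynomial.coeff_map, Algebra.smul_def, Algebra.commutes]

theorem powPoly_eval {R : Type*} [Ring R] [Algebra ℚ R] (u : R) (M : ℕ) (hu : u ^ M = 0)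
    (k : ℕ) : (powPoly u M).eval (k : R) = (1 + u) ^ k := by
  have h0 : ∀ j, j ∉ Finset.range M → u ^ j * (k.choose j : R) = 0 := by
    intro j hj
    rw [pow_eq_zero_of_le (by simpa using hj) hu, zero_mul]
  have h1 : ∀ j, j ∉ Finset.range (k + 1) → u ^ j * (k.choose j : R) = 0 := by
    intro j hj
    rw [Nat.choose_eq_zero_of_lt (by simpa using hj), Nat.cast_zero, mul_zero]
  rw [add_comm 1 u, (Commute.one_right u).add_pow, powPoly, Polynomial.eval_finsetSum]
  have h2 : ∀ j, (Polynomial.C (u ^ j) * (binomPoly j).map (algebraMap ℚ R)).eval (k : R)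
      = u ^ j * (k.choose j : R) := by
    intro j
    rw [Polynomial.eval_C_mul, ← map_natCast (algebraMap ℚ R) k, Polynomial.eval_map_apply,
      binomPoly_eval, map_natCast]
  simp only [h2, one_pow, mul_one]
  trans ∑ j ∈ Finset.range M ∪ Finset.range (k + 1), u ^ j * (k.choose j : R)
  · exact Finset.sum_subset Finset.subset_union_left fun j _ hj => h0 j hj
  · exact (Finset.sum_subset Finset.subset_union_right fun j _ hj => h1 j hj).symm

/-- `log ((1 + u) (1 + v)) = log (1 + u) + log (1 + v)` for nilpotent `u`, `v`, `w` with
`1 + w = (1 + u) (1 + v)` and `1 + u`, `1 + v` commuting: compare the linear coefficients in the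
polynomial identity extending `(1 + w)^k = (1 + u)^k (1 + v)^k`. -/
theorem log_mul {R : Type*} [Ring R] [Algebra ℚ R] {u v w : R} {M : ℕ}
    (hu : u ^ M = 0) (hv : v ^ M = 0) (hw : w ^ M = 0)
    (hc : Commute (1 + u) (1 + v)) (h : 1 + w = (1 + u) * (1 + v)) :
    ∑ j ∈ Finset.range M, logCoeff j • w ^ j =
      ∑ j ∈ Finset.range M, logCoeff j • u ^ j + ∑ j ∈ Finset.range M, logCoeff j • v ^ j := by
  rcases M with _ | M
  · simp
  have key : powPoly w (M + 1) = powPoly u (M + 1) * powPoly v (M + 1) := by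
    rw [← sub_eq_zero]
    refine eq_zero_of_eval_natCast _ fun k => ?_
    -- `eval` is multiplicative here because natural numbers are central in `R`.
    have hm : (powPoly u (M + 1) * powPoly v (M + 1)).eval (k : R) =
        (powPoly u (M + 1)).eval (k : R) * (powPoly v (M + 1)).eval (k : R) :=
      Polynomial.eval₂_mul_noncomm _ _ fun i => (Nat.cast_commute k _).symm
    rw [Polynomial.eval_sub, hm, powPoly_eval _ _ hu, powPoly_eval _ _ hv, powPoly_eval _ _ hw, h,
      hc.mul_pow, sub_self]
  have c0 : ∀ a : R, (powPoly a (M + 1)).coeff 0 = 1 := by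
    intro a
    simp [powPoly_coeff, binomPoly_coeff_zero]
  have c1 := congrArg (fun p => Polynomial.coeff p 1) key
  simp only [Polynomial.mul_coeff_one, c0, one_mul, mul_one, powPoly_coeff,
    binomPoly_coeff_one] at c1
  rw [c1, add_comm]

/-! ### The filtration of the subalgebra generated by the primitive elements -/

open TensorProduct

section Filtration

variable {A B : Type*} [CommRing A] [Ring B] [Bialgebra A B]

theorem mem_prim {x : B} : x ∈ prim A B ↔
    Coalgebra.comul (R := A) x = x ⊗ₜ[A] 1 + 1 ⊗ₜ[A] x := by
  simp [prim, sub_eq_zero]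

theorem counit_of_mem_prim {x : B} (hx : x ∈ prim A B) : Coalgebra.counit (R := A) x = 0 := by
  have h := Coalgebra.rTensor_counit_comul (R := A) x
  rw [mem_prim.mp hx] at h
  have h2 := congrArg (fun t => Coalgebra.counit (R := A) (TensorProduct.lid A B t)) h
  simpa using h2

variable (A B) in
/-- `F N`, the span of the products of at most `N` primitive elements. -/
def primFil (N : ℕ) : Submodule A B := (1 ⊔ prim A B) ^ N

variable (A B) in
/-- The filtration `primFil` shifted by one: `primFilLT N` is `F (N - 1)`, with `F (-1) = 0`. -/
def primFilLT : ℕ → Submodule A B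
  | 0 => ⊥
  | N + 1 => primFil A B N

theorem primFil_mono : Monotone (primFil A B) :=
  fun _ _ h => pow_le_pow_right' le_sup_left h

theorem primFilLT_le (N : ℕ) : primFilLT A B N ≤ primFil A B N := by
  cases N with
  | zero => exact bot_le
  | succ N => exact primFil_mono N.le_succ

theorem primFilLT_mul (N : ℕ) : primFilLT A B N * (1 ⊔ prim A B) ≤ primFilLT A B (N + 1) := by
  cases N with
  | zero => simp [primFilLT]
  | succ N => exact (pow_succ (1 ⊔ prim A B) N).ge

theorem exists_mem_primFil {x : B} (hx : x ∈ Algebra.adjoin A (prim A B : Set B)) :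
    ∃ N, x ∈ primFil A B N := by
  induction hx using Algebra.adjoin_induction with
  | mem x hx => exact ⟨1, by rw [primFil, pow_one]; exact Submodule.mem_sup_right hx⟩
  | algebraMap r => exact ⟨0, by rw [primFil, pow_zero]; exact Submodule.algebraMap_mem r⟩
  | add x y _ _ hx hy =>
    obtain ⟨m, hm⟩ := hx
    obtain ⟨n, hn⟩ := hy
    exact ⟨max m n, add_mem (primFil_mono (le_max_left m n) hm)
      (primFil_mono (le_max_right m n) hn)⟩
  | mul x y _ _ hx hy =>
    obtain ⟨m, hm⟩ := hx
    obtain ⟨n, hn⟩ := hy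
    exact ⟨m + n, by rw [primFil, pow_add]; exact Submodule.mul_mem_mul hm hn⟩

/-- The image of `U ⊗ V` in `B ⊗ B`. -/
abbrev tens (U V : Submodule A B) : Submodule A (B ⊗[A] B) :=
  Submodule.map₂ (TensorProduct.mk A B B) U V

theorem tens_mul_tens_le (U V U' V' : Submodule A B) :
    tens U V * tens U' V' ≤ tens (U * U') (V * V') := by
  rw [tens, tens, Submodule.map₂_eq_span_image2, Submodule.map₂_eq_span_image2,
    Submodule.span_mul_span, Submodule.span_le]
  rintro _ ⟨_, ⟨a, ha, b, hb, rfl⟩, _, ⟨c, hc, d, hd, rfl⟩, rfl⟩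
  simp only [TensorProduct.mk_apply, Algebra.TensorProduct.tmul_mul_tmul]
  exact Submodule.apply_mem_map₂ _ (Submodule.mul_mem_mul ha hc) (Submodule.mul_mem_mul hb hd)

theorem map_comul_one_sup_prim_le :
    (1 ⊔ prim A B).map (Bialgebra.comulAlgHom A B).toLinearMap ≤
      tens 1 (1 ⊔ prim A B) ⊔ tens (prim A B) 1 := by
  have h1 : (1 : B) ∈ (1 : Submodule A B) := Submodule.one_le.mp le_rfl
  rw [Submodule.map_le_iff_le_comap, sup_le_iff]
  constructor
  · refine Submodule.one_le.mpr (Submodule.mem_sup_left ?_)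
    change Coalgebra.comul (R := A) (1 : B) ∈ tens 1 (1 ⊔ prim A B)
    rw [Bialgebra.comul_one]
    exact Submodule.apply_mem_map₂ (TensorProduct.mk A B B) h1 (Submodule.mem_sup_left h1)
  · intro x hx
    change Coalgebra.comul (R := A) x ∈ tens 1 (1 ⊔ prim A B) ⊔ tens (prim A B) 1
    rw [mem_prim.mp hx, add_comm]
    exact Submodule.add_mem_sup
      (Submodule.apply_mem_map₂ (TensorProduct.mk A B B) h1 (Submodule.mem_sup_right hx))
      (Submodule.apply_mem_map₂ (TensorProduct.mk A B B) hx h1)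

/-- `Δ (F N) ⊆ 1 ⊗ F N + B ⊗ F (N - 1)`. Keeping `1 ⊗ F N`, and not just `1 ⊗ B`, is what makes
the induction go through, since multiplying it by `p ⊗ 1` has to give an element of `B ⊗ F N`. -/
theorem map_comul_primFil_le (N : ℕ) :
    (primFil A B N).map (Bialgebra.comulAlgHom A B).toLinearMap ≤
      tens 1 (primFil A B N) ⊔ tens ⊤ (primFilLT A B N) := by
  induction N with
  | zero =>
    have h1 : (1 : B) ∈ (1 : Submodule A B) := Submodule.one_le.mp le_rfl
    rw [primFil, pow_zero, Submodule.map_one]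
    exact le_sup_of_le_left
      (Submodule.one_le.mpr (Submodule.apply_mem_map₂ (TensorProduct.mk A B B) h1 h1))
  | succ N ih =>
    have e : primFil A B (N + 1) = primFil A B N * (1 ⊔ prim A B) := pow_succ _ _
    have h : (primFil A B (N + 1)).map (Bialgebra.comulAlgHom A B).toLinearMap ≤
        (tens 1 (primFil A B N) ⊔ tens ⊤ (primFilLT A B N)) *
          (tens 1 (1 ⊔ prim A B) ⊔ tens (prim A B) 1) := by
      rw [e, Submodule.map_mul]
      exact mul_le_mul' ih map_comul_one_sup_prim_le
    refine h.trans ?_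
    rw [Submodule.sup_mul, Submodule.mul_sup, Submodule.mul_sup]
    refine sup_le (sup_le ?_ ?_) (sup_le ?_ ?_) <;> refine (tens_mul_tens_le _ _ _ _).trans ?_
    · rw [one_mul, ← e]
      exact le_sup_left
    · rw [mul_one]
      exact le_sup_of_le_right (Submodule.map₂_le_map₂ le_top le_rfl)
    · exact le_sup_of_le_right (Submodule.map₂_le_map₂ le_top (primFilLT_mul N))
    · rw [mul_one]
      exact le_sup_of_le_right (Submodule.map₂_le_map₂ le_top (primFilLT_le N))

theorem comul_mem_of_mem_primFil {N : ℕ} {y : B} (hy : y ∈ primFil A B N) :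
    Coalgebra.comul (R := A) y ∈ tens 1 (primFil A B N) ⊔ tens ⊤ (primFilLT A B N) :=
  map_comul_primFil_le N (Submodule.mem_map_of_mem hy)

end Filtration

/-! ### Convolution powers on the filtration, and the logarithm of the coproduct -/

section Conv

open WithConv

variable {A B C : Type*} [CommRing A] [Ring B] [Bialgebra A B] [Ring C] [Algebra A C]

/-- The kernel is that of the map sending `Δ y` to `(f * g) y`, so this is the tool for showing
that a convolution product vanishes at a given element. -/
theorem tens_le_ker {U V : Submodule A B} {f g : WithConv (B →ₗ[A] C)}
    (h : ∀ a ∈ U, ∀ b ∈ V, f a * g b = 0) :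
    tens U V ≤ LinearMap.ker (LinearMap.mul' A C ∘ₗ TensorProduct.map f.ofConv g.ofConv) :=
  Submodule.map₂_le.mpr fun a ha b hb => by simpa using h a ha b hb

theorem convMul_apply_eq_zero_of_left {f g : WithConv (B →ₗ[A] C)} {N : ℕ} (hf : f 1 = 0)
    (hg : ∀ y ∈ primFilLT A B N, g y = 0) {y : B} (hy : y ∈ primFil A B N) : (f * g) y = 0 := by
  refine (sup_le (c := LinearMap.ker (LinearMap.mul' A C ∘ₗ TensorProduct.map f.ofConv g.ofConv))
    (tens_le_ker ?_) (tens_le_ker ?_) : _ ≤ _) (comul_mem_of_mem_primFil hy)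
  · intro a ha b _
    obtain ⟨r, rfl⟩ := Submodule.mem_one.mp ha
    rw [Algebra.algebraMap_eq_smul_one, map_smul, hf, smul_zero, zero_mul]
  · intro a _ b hb
    rw [hg b hb, mul_zero]

/-- If `f 1 = 0`, each convolution factor `f` lowers the filtration by one. -/
theorem convPow_apply_eq_zero {f : WithConv (B →ₗ[A] C)} (hf : f 1 = 0) (n : ℕ) :
    ∀ y ∈ primFilLT A B n, (f ^ n) y = 0 := by
  induction n with
  | zero =>
    intro y hy
    rw [(Submodule.mem_bot A).mp hy, map_zero]
  | succ n ih =>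
    intro y hy
    rw [pow_succ']
    exact convMul_apply_eq_zero_of_left hf ih hy

theorem convPow_apply_eq_zero_of_lt {f : WithConv (B →ₗ[A] C)} (hf : f 1 = 0) {n N : ℕ}
    (h : N < n) {y : B} (hy : y ∈ primFil A B N) : (f ^ n) y = 0 := by
  obtain ⟨m, rfl⟩ := Nat.exists_eq_succ_of_ne_zero (Nat.ne_zero_of_lt h)
  exact convPow_apply_eq_zero hf _ y (primFil_mono (Nat.le_of_lt_succ h) hy)

theorem comul_mem_tens_right {N : ℕ} {y : B} (hy : y ∈ primFil A B N) :
    Coalgebra.comul (R := A) y ∈ tens ⊤ (primFil A B N) :=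
  (sup_le (Submodule.map₂_le_map₂ le_top le_rfl)
    (Submodule.map₂_le_map₂ le_rfl (primFilLT_le N)) : _ ≤ tens ⊤ (primFil A B N)) (comul_mem_of_mem_primFil hy)

theorem comul_mem_tens_left (hcocomm : ∀ x : B,
      (TensorProduct.comm A B B) (Coalgebra.comul (R := A) x) = Coalgebra.comul (R := A) x)
    {N : ℕ} {y : B} (hy : y ∈ primFil A B N) :
    Coalgebra.comul (R := A) y ∈ tens (primFil A B N) ⊤ := by
  rw [← hcocomm y]
  have : tens ⊤ (primFil A B N) ≤ (tens (primFil A B N) ⊤).comap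
      (TensorProduct.comm A B B).toLinearMap :=
    Submodule.map₂_le.mpr fun a ha b hb =>
      Submodule.apply_mem_map₂ (TensorProduct.mk A B B) hb ha
  exact this (comul_mem_tens_right hy)

variable (C) in
/-- The ideal, in the convolution algebra, of the maps vanishing on `primFil A B N`. It is a left
ideal in general, and two-sided when `B` is cocommutative (`annFil_isTwoSided`). -/
def annFil (N : ℕ) : Ideal (WithConv (B →ₗ[A] C)) where
  carrier := {f | ∀ y ∈ primFil A B N, f y = 0}
  add_mem' {f g} hf hg y hy := by
    change f y + g y = 0
    rw [hf y hy, hg y hy, add_zero]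
  zero_mem' _ _ := rfl
  smul_mem' f g hg y hy := tens_le_ker (f := f) (g := g)
    (fun a _ b hb => by rw [hg b hb, mul_zero]) (comul_mem_tens_right hy)

theorem annFil_isTwoSided (hcocomm : ∀ x : B,
      (TensorProduct.comm A B B) (Coalgebra.comul (R := A) x) = Coalgebra.comul (R := A) x)
    (N : ℕ) : (annFil (A := A) (B := B) C N).IsTwoSided where
  mul_mem_of_left {f} g hf y hy := tens_le_ker (f := f) (g := g)
    (fun a ha b _ => by rw [hf a ha, zero_mul]) (comul_mem_tens_left hcocomm hy)

theorem ofConv_pow_Iplus (n : ℕ) :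
    ((toConv (Iplus A B)) ^ n).ofConv = bconvPow A B (Iplus A B) n := by
  induction n with
  | zero => rfl
  | succ n ih => rw [pow_succ', bconvPow, ← ih]; rfl

theorem Iplus_one : Iplus A B 1 = 0 := by simp [Iplus, bunit]

/-- Composition with an algebra map `h` is multiplicative for convolution and sends `I⁺` to
`h - 1`. -/
theorem algHom_sub_one_pow (h : B →ₐ[A] C) (n : ℕ) :
    (toConv h.toLinearMap - 1) ^ n =
      toConv (h.toLinearMap ∘ₗ bconvPow A B (Iplus A B) n) := by
  induction n with
  | zero =>
    ext x
    simp [bconvPow, bunit]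
  | succ n ih =>
    have h1 : toConv h.toLinearMap - 1 = toConv (h.toLinearMap ∘ₗ Iplus A B) := by
      ext x
      simp [Iplus, bunit]
    rw [pow_succ', ih, h1]
    exact congrArg toConv (LinearMap.algHom_comp_convMul_distrib h (toConv (Iplus A B))
      (toConv (bconvPow A B (Iplus A B) n))).symm

theorem algHom_sub_one_one (h : B →ₐ[A] C) :
    (toConv h.toLinearMap - 1 : WithConv (B →ₗ[A] C)) 1 = 0 := by
  change h 1 - algebraMap A C (Coalgebra.counit (R := A) 1) = 0
  simp

/-- `Δ` is the convolution product of `x ↦ x ⊗ 1` and `x ↦ 1 ⊗ x`. -/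
theorem convMul_include : (toConv (Algebra.TensorProduct.includeLeft :
      B →ₐ[A] B ⊗[A] B).toLinearMap) * toConv (Algebra.TensorProduct.includeRight :
      B →ₐ[A] B ⊗[A] B).toLinearMap = toConv (Bialgebra.comulAlgHom A B).toLinearMap := by
  have : LinearMap.mul' A (B ⊗[A] B) ∘ₗ TensorProduct.map
      (Algebra.TensorProduct.includeLeft : B →ₐ[A] B ⊗[A] B).toLinearMap
      (Algebra.TensorProduct.includeRight : B →ₐ[A] B ⊗[A] B).toLinearMap = LinearMap.id := by
    ext; simp
  ext x
  exact LinearMap.congr_fun this (Coalgebra.comul x)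

/-- By cocommutativity, the convolution factors `x ↦ x ⊗ 1` and `x ↦ 1 ⊗ x` of `Δ` commute. -/
theorem convMul_include' (hcocomm : ∀ x : B,
      (TensorProduct.comm A B B) (Coalgebra.comul (R := A) x) = Coalgebra.comul (R := A) x) :
    (toConv (Algebra.TensorProduct.includeRight :
      B →ₐ[A] B ⊗[A] B).toLinearMap) * toConv (Algebra.TensorProduct.includeLeft :
      B →ₐ[A] B ⊗[A] B).toLinearMap = toConv (Bialgebra.comulAlgHom A B).toLinearMap := by
  have : LinearMap.mul' A (B ⊗[A] B) ∘ₗ TensorProduct.map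
      (Algebra.TensorProduct.includeRight : B →ₐ[A] B ⊗[A] B).toLinearMap
      (Algebra.TensorProduct.includeLeft : B →ₐ[A] B ⊗[A] B).toLinearMap =
      (TensorProduct.comm A B B).toLinearMap := by
    ext; simp
  ext x
  exact (LinearMap.congr_fun this (Coalgebra.comul x)).trans (hcocomm x)

/-- On `F N` the logarithm is the sum of its terms of degree at most `N`, and it is primitive:
the identity `log Δ = log (x ↦ x ⊗ 1) + log (x ↦ 1 ⊗ x)`, which holds modulo the maps vanishing
on `F N`, evaluates to `Δ (log x) = log x ⊗ 1 + 1 ⊗ log x`. -/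
theorem log_mem_prim [Algebra ℚ A] (hcocomm : ∀ x : B,
      (TensorProduct.comm A B B) (Coalgebra.comul (R := A) x) = Coalgebra.comul (R := A) x)
    {N : ℕ} {x : B} (hx : x ∈ primFil A B N) :
    ∑ j ∈ Finset.range (N + 1),
      (algebraMap ℚ A (logCoeff j) • bconvPow A B (Iplus A B) j) x ∈ prim A B := by
  set K := annFil (A := A) (B := B) (B ⊗[A] B) N with hK
  have : K.IsTwoSided := annFil_isTwoSided hcocomm N
  let : Algebra ℚ (WithConv (B →ₗ[A] B ⊗[A] B) ⧸ K) := Algebra.compHom _ (algebraMap ℚ A)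
  let iL := toConv (Algebra.TensorProduct.includeLeft : B →ₐ[A] B ⊗[A] B).toLinearMap
  let iR := toConv (Algebra.TensorProduct.includeRight : B →ₐ[A] B ⊗[A] B).toLinearMap
  let D := toConv (Bialgebra.comulAlgHom A B).toLinearMap
  let π := Ideal.Quotient.mk K
  have hnil : ∀ h : B →ₐ[A] B ⊗[A] B, π (toConv h.toLinearMap - 1) ^ (N + 1) = 0 := by
    intro h
    rw [← map_pow, Ideal.Quotient.eq_zero_iff_mem]
    exact fun y hy => convPow_apply_eq_zero_of_lt (algHom_sub_one_one h) N.lt_succ_self hy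
  have hadd : ∀ f, 1 + π (f - 1) = π f := by
    intro f
    rw [map_sub, map_one, add_sub_cancel]
  have hLR : iL * iR = D := convMul_include
  have hRL : iR * iL = D := convMul_include' hcocomm
  -- `log_mul` in the quotient by `K`, where all three elements are nilpotent.
  have key := log_mul (u := π (iL - 1)) (v := π (iR - 1)) (w := π (D - 1)) (M := N + 1)
    (hnil _) (hnil _) (hnil _)
    (by rw [hadd, hadd]; change _ * _ = _ * _; rw [← map_mul, ← map_mul, hLR, hRL])
    (by rw [hadd, hadd, hadd, ← map_mul, hLR])
  have hlift : ∀ f, ∑ j ∈ Finset.range (N + 1), logCoeff j • π (f - 1) ^ j =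
      π (∑ j ∈ Finset.range (N + 1), algebraMap ℚ A (logCoeff j) • (f - 1) ^ j) := by
    intro f
    rw [map_sum]
    refine Finset.sum_congr rfl fun j _ => ?_
    rw [← map_pow]
    rfl
  rw [hlift, hlift, hlift, ← map_add, Ideal.Quotient.eq] at key
  have h1 := key x hx
  have hev : ∀ h : B →ₐ[A] B ⊗[A] B,
      (∑ j ∈ Finset.range (N + 1),
        algebraMap ℚ A (logCoeff j) • (toConv h.toLinearMap - 1) ^ j).ofConv x =
      h (∑ j ∈ Finset.range (N + 1),
        (algebraMap ℚ A (logCoeff j) • bconvPow A B (Iplus A B) j) x) := by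
    intro h
    rw [ofConv_sum, LinearMap.sum_apply, map_sum]
    refine Finset.sum_congr rfl fun j _ => ?_
    rw [algHom_sub_one_pow, LinearMap.smul_apply, map_smul]
    rfl
  rw [ofConv_sub, ofConv_add, LinearMap.sub_apply, LinearMap.add_apply, hev, hev, hev,
    sub_eq_zero] at h1
  exact mem_prim.mpr h1

theorem logTerm_eq_zero [Algebra ℚ A] {n N : ℕ} (h : N < n) {x : B} (hx : x ∈ primFil A B N) :
    (algebraMap ℚ A (logCoeff n) • bconvPow A B (Iplus A B) n) x = 0 := by
  rw [LinearMap.smul_apply, ← ofConv_pow_Iplus,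
    convPow_apply_eq_zero_of_lt (f := toConv (Iplus A B)) Iplus_one h hx, smul_zero]

theorem support_logTerm_subset [Algebra ℚ A] {N : ℕ} {x : B} (hx : x ∈ primFil A B N) :
    (Function.support fun n => (algebraMap ℚ A (logCoeff n) • bconvPow A B (Iplus A B) n) x) ⊆
      ↑(Finset.range (N + 1)) := by
  intro n hn
  by_contra h
  have h' : N < n := by
    rw [Finset.mem_coe, Finset.mem_range] at h
    omega
  exact hn (logTerm_eq_zero h' hx)

end Conv

/-- Let `A ⊇ ℚ`, `B` a cocommutative `A`-bialgebra and `A'` the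
subalgebra generated by the primitive elements. Then the series
`log_*(I) = ∑_{n≥1} ((−1)^{n−1}/n)(I⁺)^{*n}` is summable on `A'`, the resulting map
`π₁` sends `A'` into `Prim(B)`, and `π₁` is the identity on `Prim(B)`; i.e. `π₁`
restricted to `A'` is a projector of `A'` onto `Prim(B)`. -/
theorem stmt_7 {A B : Type*} [CommRing A] [Algebra ℚ A] [Ring B] [Bialgebra A B]
    (hcocomm : ∀ x : B,
      (TensorProduct.comm A B B) (Coalgebra.comul (R := A) x) = Coalgebra.comul (R := A) x) :
    (∀ x ∈ Algebra.adjoin A (prim A B : Set B),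
      (Function.support fun n =>
        ((algebraMap ℚ A (logCoeff n)) • bconvPow A B (Iplus A B) n) x).Finite) ∧
    (∀ x ∈ Algebra.adjoin A (prim A B : Set B),
      (∑ᶠ n, ((algebraMap ℚ A (logCoeff n)) • bconvPow A B (Iplus A B) n) x) ∈ prim A B) ∧
    (∀ x ∈ prim A B,
      (∑ᶠ n, ((algebraMap ℚ A (logCoeff n)) • bconvPow A B (Iplus A B) n) x) = x) := by
  refine ⟨fun x hx => ?_, fun x hx => ?_, fun x hx => ?_⟩
  · obtain ⟨N, hN⟩ := exists_mem_primFil hx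
    exact (Finset.finite_toSet _).subset (support_logTerm_subset hN)
  · obtain ⟨N, hN⟩ := exists_mem_primFil hx
    rw [finsum_eq_sum_of_support_subset _ (support_logTerm_subset hN)]
    exact log_mem_prim hcocomm hN
  · have h1 : x ∈ primFil A B 1 := by
      rw [primFil, pow_one]
      exact Submodule.mem_sup_right hx
    rw [finsum_eq_sum_of_support_subset _ (support_logTerm_subset h1), Finset.sum_range_succ,
      Finset.sum_range_one, ← ofConv_pow_Iplus, ← ofConv_pow_Iplus, pow_one]
    simp [logCoeff, Iplus, bunit, counit_of_mem_prim hx]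

end PaperD
end
end

section
/- Let A be a commutative unitary ring, Y a set, and φ : Y × Y → AY an arbitrary map into the A-span of the letters. Then there exists a unique map ⧆_φ : Y* × Y* → A⟨Y⟩ satisfying: (i) 1_{Y*} ⧆_φ w = w ⧆_φ 1_{Y*} = w for all w ∈ Y*; (ii) y_i u ⧆_φ y_j v = y_i (u ⧆_φ y_j v) + y_j (y_i u ⧆_φ v) + φ(y_i,y_j)(u ⧆_φ v) for all letters y_i, y_j ∈ Y and words u, v ∈ Y*. -/
/-! Words form a free monoid, so every word is either empty or factors uniquely as a letter
times a shorter word. The conditions therefore prescribe exactly one value of the product at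
each pair of words: the unit conditions when one of the words is empty, the recursion when
neither is. The recursion only calls pairs of smaller total length, so it defines a map
(`stuffleList`), and a double induction on the two words shows that any other solution agrees
with this one. -/

noncomputable section
namespace PaperStmt15

/-- The embedding of `AY` (the span of the letters, presented as finitely supported
functions on `Y`) into `A⟨Y⟩ = A[Y*]`. -/
def emb {A Y : Type*} [CommRing A] (c : Y →₀ A) : MonoidAlgebra A (FreeMonoid Y) :=
  c.sum fun k a => MonoidAlgebra.single (FreeMonoid.of k) a

/-- The `φ`-deformed stuffle product of two words, with words written as lists of letters.
The recursion terminates because the total length of the two words decreases. -/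
def stuffleList {A Y : Type*} [CommRing A] (φ : Y → Y → (Y →₀ A)) :
    List Y → List Y → MonoidAlgebra A (FreeMonoid Y)
  | [], w => MonoidAlgebra.single (FreeMonoid.ofList w) 1
  | y :: u, [] => MonoidAlgebra.single (FreeMonoid.ofList (y :: u)) 1
  | y :: u, z :: v =>
      MonoidAlgebra.single (FreeMonoid.of y) 1 * stuffleList φ u (z :: v) +
      MonoidAlgebra.single (FreeMonoid.of z) 1 * stuffleList φ (y :: u) v +
      emb (φ y z) * stuffleList φ u v
  termination_by u v => u.length + v.length

/-- For an arbitrary map `φ : Y × Y → AY` there is a unique map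
`⧆_φ : Y* × Y* → A⟨Y⟩` such that `1 ⧆ w = w ⧆ 1 = w` and
`y u ⧆ z v = y (u ⧆ z v) + z (y u ⧆ v) + φ(y,z) (u ⧆ v)`. -/
theorem stmt_15 {A Y : Type*} [CommRing A] (φ : Y → Y → (Y →₀ A)) :
    ∃! st : FreeMonoid Y → FreeMonoid Y → MonoidAlgebra A (FreeMonoid Y),
      (∀ w : FreeMonoid Y,
        st 1 w = MonoidAlgebra.single w 1 ∧ st w 1 = MonoidAlgebra.single w 1) ∧
      (∀ (y z : Y) (u v : FreeMonoid Y),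
        st (FreeMonoid.of y * u) (FreeMonoid.of z * v) =
          MonoidAlgebra.single (FreeMonoid.of y) 1 * st u (FreeMonoid.of z * v) +
          MonoidAlgebra.single (FreeMonoid.of z) 1 * st (FreeMonoid.of y * u) v +
          emb (φ y z) * st u v) := by
  refine ⟨fun u v => stuffleList φ u.toList v.toList, ⟨fun w => ⟨?_, ?_⟩, ?_⟩, ?_⟩
  · simp [stuffleList]
  · cases w using FreeMonoid.casesOn <;> simp [stuffleList]
  · intro y z u v
    simp only [FreeMonoid.toList_of_mul]
    rw [stuffleList]
  · rintro st ⟨h1, h2⟩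
    funext u v
    induction u using FreeMonoid.inductionOn' generalizing v with
    | one => simp [stuffleList, (h1 v).1]
    | of_mul y u ihu =>
      induction v using FreeMonoid.inductionOn' with
      | one => simp [stuffleList, (h1 _).2]
      | of_mul z v ihv =>
        rw [h2, ihu, ihu, ihv]
        simp only [FreeMonoid.toList_of_mul]
        rw [stuffleList]

end PaperStmt15
end
end
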